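/- arXiv:0710.5350 — 4 statements merged into one kernel-verified Lean document; each statement's English description precedes it below -/
import Mathlib

section
/- A positive semidefinite 16×16 complex matrix ρ on the four-qubit space (order A',B',A'',B'') commutes with σ_k⊗σ_k⊗I₂⊗I₂ and with I₂⊗I₂⊗σ_k⊗σ_k for every k ∈ {x,y,z} if and only if there exist nonnegative reals r_{ij} (1 ≤ i,j ≤ 4) such that ρ = Σ_{i,j} r_{ij} Π_i⊗Π_j, where the first Bell projector acts on the qubits A'B' and the second on A''B''. -/
open Matrix Complex
open scoped Kronecker ComplexOrder

noncomputable section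
namespace Paper

abbrev Q2 := Fin 2 × Fin 2
abbrev M4 := Matrix Q2 Q2 ℂ
abbrev M16 := Matrix (Q2 × Q2) (Q2 × Q2) ℂ

/-- `1/√2` as a complex number. -/
def invSqrt2 : ℂ := ((Real.sqrt 2)⁻¹ : ℝ)

/-- The four Bell states `|Φ₁⟩,…,|Φ₄⟩` as vectors in `ℂ²⊗ℂ²`
(product basis indexed by `Fin 2 × Fin 2`). -/
def bell : Fin 4 → Q2 → ℂ :=
  ![fun p => !![invSqrt2, 0; 0, invSqrt2] p.1 p.2,
    fun p => !![invSqrt2, 0; 0, -invSqrt2] p.1 p.2,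
    fun p => !![0, invSqrt2; invSqrt2, 0] p.1 p.2,
    fun p => !![0, invSqrt2; -invSqrt2, 0] p.1 p.2]

/-- The Bell projectors `Π_i = |Φ_i⟩⟨Φ_i|`. -/
def BellProj (i : Fin 4) : M4 := vecMulVec (bell i) (star (bell i))

/-- The Pauli matrices `σ_x, σ_y, σ_z`. -/
def pauli : Fin 3 → Matrix (Fin 2) (Fin 2) ℂ :=
  ![!![0, 1; 1, 0], !![0, -I; I, 0], !![1, 0; 0, -1]]

/-- Reindexing `((a',b'),(a'',b'')) ↦ ((a',a''),(b',b''))`. -/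
def swapMid : (Q2 × Q2) ≃ (Q2 × Q2) where
  toFun p := ((p.1.1, p.2.1), (p.1.2, p.2.2))
  invFun p := ((p.1.1, p.2.1), (p.1.2, p.2.2))
  left_inv _ := rfl
  right_inv _ := rfl

/-- The rank-one matrix `x x†`. -/
def pureMat {d : Type*} (x : d → ℂ) : Matrix d d ℂ := vecMulVec x (star x)

/-- Separability of a 16×16 four-qubit matrix (qubit order A',B',A'',B'')
across the partition A = (A',A''), B = (B',B''). -/
def SepAB (ρ : M16) : Prop :=
  ∃ (n : ℕ) (x y : Fin n → Q2 → ℂ),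
    (Matrix.reindex swapMid swapMid ρ) = ∑ k, (pureMat (x k)) ⊗ₖ (pureMat (y k))

/-!
Each `σ_k ⊗ σ_k` is diagonal in the Bell basis, with signs as eigenvalues; the sign table, completed
by a column of ones for the identity, is a `4 × 4` Hadamard matrix, so it can be inverted and the
three operators generate the same algebra as the four Bell projectors. Commuting with all
`σ_k ⊗ σ_k ⊗ I ⊗ I` and `I ⊗ I ⊗ σ_k ⊗ σ_k` is therefore commuting with all `Π_i ⊗ Π_j`, which are
the rank-one projectors of an orthonormal basis: `ρ` is diagonal in it, and positivity makes its
diagonal entries nonnegative.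
-/

section Algebra

variable {R A B ι κ : Type*} [CommSemiring R] [Semiring A] [Algebra R A] [Semiring B] [Algebra R B]

lemma forall_commute_map_iff_of_adjoin_range_eq {s : κ → A} {t : ι → A}
    (hst : Algebra.adjoin R (Set.range s) = Algebra.adjoin R (Set.range t))
    (f : A →ₐ[R] B) (b : B) :
    (∀ k, Commute b (f (s k))) ↔ ∀ i, Commute b (f (t i)) := by
  have mem_comap_centralizer (a : A) :
      a ∈ (Subalgebra.centralizer R {b}).comap f ↔ Commute b (f a) := by
    simp [Subalgebra.mem_centralizer_iff, commute_iff_eq]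
  simp only [← mem_comap_centralizer, ← SetLike.mem_coe, ← Set.range_subset_iff,
    ← Algebra.adjoin_le_iff, hst]

lemma commute_sum_smul_of_orthogonalIdempotents [Fintype ι] {e : ι → A}
    (he : OrthogonalIdempotents e) (c : ι → R) (j : ι) :
    Commute (∑ i, c i • e i) (e j) := by
  classical
  simp [commute_iff_eq, Finset.sum_mul, Finset.mul_sum, he.mul_eq]

end Algebra

section Kronecker

variable {R m n ι κ : Type*} [CommSemiring R]
  [Fintype m] [DecidableEq m] [Fintype n] [DecidableEq n]

/-- The embedding `A ↦ A ⊗ 1` of the operators on the first tensor factor. -/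
def kroneckerOneAlgHom : Matrix m m R →ₐ[R] Matrix (m × n) (m × n) R :=
  AlgHom.ofLinearMap ((kroneckerBilinear (R := R)).flip 1)
    (one_kronecker_one (α := R) (m := m) (n := n))
    fun A B => by simpa using! mul_kronecker_mul A B (1 : Matrix n n R) 1

/-- The embedding `B ↦ 1 ⊗ B` of the operators on the second tensor factor. -/
def oneKroneckerAlgHom : Matrix n n R →ₐ[R] Matrix (m × n) (m × n) R :=
  AlgHom.ofLinearMap (kroneckerBilinear (R := R) 1) one_kronecker_one
    fun A B => by simpa using! mul_kronecker_mul (1 : Matrix m m R) 1 A B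

lemma kroneckerOneAlgHom_apply (A : Matrix m m R) :
    kroneckerOneAlgHom A = A ⊗ₖ (1 : Matrix n n R) := rfl

lemma oneKroneckerAlgHom_apply (B : Matrix n n R) :
    oneKroneckerAlgHom B = (1 : Matrix m m R) ⊗ₖ B := rfl

lemma kronecker_eq_mul (A : Matrix m m R) (B : Matrix n n R) :
    A ⊗ₖ B = kroneckerOneAlgHom A * oneKroneckerAlgHom B := by
  simp [kroneckerOneAlgHom_apply, oneKroneckerAlgHom_apply, ← mul_kronecker_mul]

variable [Fintype ι] [Fintype κ] {e : ι → Matrix m m R} {f : κ → Matrix n n R}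

lemma forall_commute_kronecker_iff (he : ∑ i, e i = 1) (hf : ∑ j, f j = 1)
    (ρ : Matrix (m × n) (m × n) R) :
    (∀ i j, Commute ρ (e i ⊗ₖ f j)) ↔
      (∀ i, Commute ρ (kroneckerOneAlgHom (e i))) ∧ ∀ j, Commute ρ (oneKroneckerAlgHom (f j)) := by
  simp only [kronecker_eq_mul]
  refine ⟨fun h => ⟨fun i => ?_, fun j => ?_⟩, fun ⟨h₁, h₂⟩ i j => (h₁ i).mul_right (h₂ j)⟩
  · rw [← mul_one (kroneckerOneAlgHom (e i)), ← map_one oneKroneckerAlgHom, ← hf, map_sum,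
      Finset.mul_sum]
    exact Commute.sum_right _ _ _ fun j _ => h i j
  · rw [← one_mul (oneKroneckerAlgHom (f j)), ← map_one kroneckerOneAlgHom, ← he, map_sum,
      Finset.sum_mul]
    exact Commute.sum_right _ _ _ fun i _ => h i j

lemma completeOrthogonalIdempotents_kronecker
    (he : CompleteOrthogonalIdempotents e) (hf : CompleteOrthogonalIdempotents f) :
    CompleteOrthogonalIdempotents fun p : ι × κ => e p.1 ⊗ₖ f p.2 := by
  classical
  refine ⟨OrthogonalIdempotents.iff_mul_eq.mpr fun p q => ?_, ?_⟩
  · rw [← mul_kronecker_mul, he.mul_eq, hf.mul_eq]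
    by_cases h₁ : p.1 = q.1 <;> by_cases h₂ : p.2 = q.2 <;> simp [Prod.ext_iff, h₁, h₂]
  · simp only [kronecker_eq_mul, Fintype.sum_prod_type, ← Finset.mul_sum,
      ← map_sum, he.complete, hf.complete, map_one, mul_one]

end Kronecker

section RankOne

variable {m n ι κ : Type*}

lemma pureMat_kronecker_pureMat (x : m → ℂ) (y : n → ℂ) :
    pureMat x ⊗ₖ pureMat y = pureMat fun p : m × n => x p.1 * y p.2 := by
  ext p q
  simp only [pureMat, kroneckerMap_apply, vecMulVec_apply, Pi.star_apply, star_mul']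
  ring

variable [Fintype n]

lemma pureMat_mul_mul_pureMat (x : n → ℂ) (A : Matrix n n ℂ) :
    pureMat x * A * pureMat x = (star x ⬝ᵥ A *ᵥ x) • pureMat x := by
  rw [pureMat, mul_assoc, mul_vecMulVec, vecMulVec_mul_vecMulVec, vecMulVec_smul]

variable [DecidableEq n] [Fintype ι]

lemma completeOrthogonalIdempotents_pureMat [DecidableEq ι] {v : ι → n → ℂ}
    (hcard : Fintype.card ι = Fintype.card n)
    (hv : ∀ i j, star (v i) ⬝ᵥ v j = if i = j then 1 else 0) :
    CompleteOrthogonalIdempotents fun i => pureMat (v i) := by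
  refine ⟨OrthogonalIdempotents.iff_mul_eq.mpr fun i j => ?_, ?_⟩
  · rw [pureMat, pureMat, vecMulVec_mul_vecMulVec, hv]
    split_ifs with hij <;> simp [hij]
  · let V : Matrix n ι ℂ := of fun p i => v i p
    have hV : Vᴴ * V = 1 := by
      ext i j
      exact (hv i j).trans (one_apply ..).symm
    have hV' : V * Vᴴ = 1 := (mul_eq_one_comm_of_equiv (Fintype.equivOfCardEq hcard)).mp hV
    rw [← hV']
    ext p q
    simp [V, pureMat, Matrix.sum_apply, mul_apply, vecMulVec_apply]

lemma eq_sum_smul_pureMat_of_commute {v : ι → n → ℂ}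
    (hv : CompleteOrthogonalIdempotents fun i => pureMat (v i)) {A : Matrix n n ℂ}
    (hA : ∀ i, Commute A (pureMat (v i))) :
    A = ∑ i, (star (v i) ⬝ᵥ A *ᵥ v i) • pureMat (v i) :=
  calc
    A = ∑ i, A * pureMat (v i) := by rw [← Finset.mul_sum, hv.complete, mul_one]
    _ = ∑ i, pureMat (v i) * A * pureMat (v i) := by
      simp only [← (hA _).eq, mul_assoc, (hv.idem _).eq]
    _ = ∑ i, (star (v i) ⬝ᵥ A *ᵥ v i) • pureMat (v i) := by simp only [pureMat_mul_mul_pureMat]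

theorem forall_commute_pureMat_iff_exists_nonneg {v : ι → n → ℂ}
    (hv : CompleteOrthogonalIdempotents fun i => pureMat (v i)) {A : Matrix n n ℂ}
    (hA : A.PosSemidef) :
    (∀ i, Commute A (pureMat (v i))) ↔
      ∃ r : ι → ℝ, (∀ i, 0 ≤ r i) ∧ A = ∑ i, (r i : ℂ) • pureMat (v i) := by
  constructor
  · intro hcomm
    choose r hr_nonneg hr using fun i =>
      RCLike.nonneg_iff_exists_ofReal.mp (hA.dotProduct_mulVec_nonneg (v i))
    refine ⟨r, hr_nonneg, (eq_sum_smul_pureMat_of_commute hv hcomm).trans ?_⟩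
    simp only [← hr, coe_algebraMap]
  · rintro ⟨r, -, rfl⟩ i
    exact commute_sum_smul_of_orthogonalIdempotents hv.toOrthogonalIdempotents _ i

theorem forall_commute_pureMat_kronecker_iff_exists_nonneg [Fintype m] [DecidableEq m] [Fintype κ]
    {v : ι → m → ℂ} {w : κ → n → ℂ}
    (hv : CompleteOrthogonalIdempotents fun i => pureMat (v i))
    (hw : CompleteOrthogonalIdempotents fun j => pureMat (w j))
    {A : Matrix (m × n) (m × n) ℂ} (hA : A.PosSemidef) :
    (∀ i j, Commute A (pureMat (v i) ⊗ₖ pureMat (w j))) ↔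
      ∃ r : ι → κ → ℝ, (∀ i j, 0 ≤ r i j) ∧
        A = ∑ i, ∑ j, (r i j : ℂ) • (pureMat (v i) ⊗ₖ pureMat (w j)) := by
  have hvw := completeOrthogonalIdempotents_kronecker hv hw
  simp only [pureMat_kronecker_pureMat] at hvw ⊢
  rw [← (Equiv.curry ι κ ℝ).exists_congr_right]
  simpa [Fintype.sum_prod_type, Prod.forall] using forall_commute_pureMat_iff_exists_nonneg hvw hA

end RankOne

section Bell

lemma invSqrt2_mul_self : invSqrt2 * invSqrt2 = 1 / 2 := by
  rw [invSqrt2, ← ofReal_mul, ← mul_inv, Real.mul_self_sqrt zero_le_two]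
  norm_num

lemma conj_invSqrt2 : starRingEnd ℂ invSqrt2 = invSqrt2 := conj_ofReal _

lemma star_bell_dotProduct_bell (i j : Fin 4) :
    star (bell i) ⬝ᵥ bell j = if i = j then 1 else 0 := by
  fin_cases i <;> fin_cases j <;>
    norm_num [bell, dotProduct, Fintype.sum_prod_type, conj_invSqrt2, invSqrt2_mul_self]

lemma completeOrthogonalIdempotents_bellProj : CompleteOrthogonalIdempotents BellProj :=
  completeOrthogonalIdempotents_pureMat rfl star_bell_dotProduct_bell

/-- The eigenvalue of `σ_k ⊗ σ_k` on the Bell state `Φ_i`. -/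
def bellSign : Fin 4 → Fin 3 → ℂ := ![![1, -1, 1], ![-1, 1, 1], ![1, 1, -1], ![-1, -1, -1]]

lemma one_add_sum_bellSign_mul_bellSign (i j : Fin 4) :
    1 + ∑ k, bellSign i k * bellSign j k = if i = j then 4 else 0 := by
  fin_cases i <;> fin_cases j <;> simp [bellSign, Fin.sum_univ_three] <;> norm_num

lemma pauli_kronecker_pauli_mulVec_bell (k : Fin 3) (i : Fin 4) :
    (pauli k ⊗ₖ pauli k) *ᵥ bell i = bellSign i k • bell i := by
  ext ⟨a, b⟩
  fin_cases k <;> fin_cases i <;> fin_cases a <;> fin_cases b <;>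
    simp [pauli, bell, bellSign, mulVec, dotProduct, Fintype.sum_prod_type]

lemma pauli_kronecker_pauli_eq_sum (k : Fin 3) :
    pauli k ⊗ₖ pauli k = ∑ i, bellSign i k • BellProj i :=
  calc
    pauli k ⊗ₖ pauli k = ∑ i, (pauli k ⊗ₖ pauli k) * BellProj i := by
      rw [← Finset.mul_sum, completeOrthogonalIdempotents_bellProj.complete, mul_one]
    _ = ∑ i, bellSign i k • BellProj i := by
      simp only [BellProj, mul_vecMulVec, pauli_kronecker_pauli_mulVec_bell, smul_vecMulVec]

lemma four_smul_bellProj (i : Fin 4) :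
    (4 : ℂ) • BellProj i = 1 + ∑ k, bellSign i k • (pauli k ⊗ₖ pauli k) := by
  symm
  calc
    1 + ∑ k, bellSign i k • (pauli k ⊗ₖ pauli k)
      = ∑ j, (1 + ∑ k, bellSign i k * bellSign j k) • BellProj j := by
        simp only [pauli_kronecker_pauli_eq_sum, Finset.smul_sum, smul_smul, add_smul, one_smul,
          Finset.sum_smul, Finset.sum_add_distrib, completeOrthogonalIdempotents_bellProj.complete]
        rw [Finset.sum_comm]
    _ = (4 : ℂ) • BellProj i := by simp [one_add_sum_bellSign_mul_bellSign]

lemma adjoin_pauli_kronecker_pauli_eq_adjoin_bellProj :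
    Algebra.adjoin ℂ (Set.range fun k => pauli k ⊗ₖ pauli k) =
      Algebra.adjoin ℂ (Set.range BellProj) := by
  apply le_antisymm <;> rw [Algebra.adjoin_le_iff, Set.range_subset_iff]
  · intro k
    rw [SetLike.mem_coe, pauli_kronecker_pauli_eq_sum]
    exact sum_mem fun i _ =>
      Subalgebra.smul_mem _ (Algebra.subset_adjoin (Set.mem_range_self i)) _
  · intro i
    rw [← inv_smul_smul₀ (four_ne_zero (α := ℂ)) (BellProj i), four_smul_bellProj]
    exact Subalgebra.smul_mem _ (add_mem (one_mem _) (sum_mem fun k _ =>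
      Subalgebra.smul_mem _ (Algebra.subset_adjoin (Set.mem_range_self k)) _)) _

end Bell

/-- A PSD 16×16 four-qubit matrix (order A',B',A'',B'') commutes with
`σ_k⊗σ_k⊗I⊗I` and `I⊗I⊗σ_k⊗σ_k` for all Pauli `σ_k` iff it is a nonnegative
combination of the matrices `Π_i ⊗ Π_j`. -/
theorem stmt1 (ρ : M16) (hρ : ρ.PosSemidef) :
    (∀ k : Fin 3,
        ρ * ((pauli k ⊗ₖ pauli k) ⊗ₖ (1 : M4)) = ((pauli k ⊗ₖ pauli k) ⊗ₖ (1 : M4)) * ρ ∧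
        ρ * ((1 : M4) ⊗ₖ (pauli k ⊗ₖ pauli k)) = ((1 : M4) ⊗ₖ (pauli k ⊗ₖ pauli k)) * ρ) ↔
      ∃ r : Fin 4 → Fin 4 → ℝ, (∀ i j, 0 ≤ r i j) ∧
        ρ = ∑ i, ∑ j, (r i j : ℂ) • (BellProj i ⊗ₖ BellProj j) := by
  have hBell := completeOrthogonalIdempotents_bellProj
  have hadjoin := adjoin_pauli_kronecker_pauli_eq_adjoin_bellProj
  calc
    _ ↔ (∀ k, Commute ρ (kroneckerOneAlgHom (pauli k ⊗ₖ pauli k))) ∧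
          ∀ k, Commute ρ (oneKroneckerAlgHom (pauli k ⊗ₖ pauli k)) := forall_and
    _ ↔ (∀ i, Commute ρ (kroneckerOneAlgHom (BellProj i))) ∧
          ∀ j, Commute ρ (oneKroneckerAlgHom (BellProj j)) :=
      and_congr (forall_commute_map_iff_of_adjoin_range_eq hadjoin _ ρ)
        (forall_commute_map_iff_of_adjoin_range_eq hadjoin _ ρ)
    _ ↔ ∀ i j, Commute ρ (BellProj i ⊗ₖ BellProj j) :=
      (forall_commute_kronecker_iff hBell.complete hBell.complete ρ).symm
    _ ↔ _ := forall_commute_pureMat_kronecker_iff_exists_nonneg hBell hBell hρ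

end Paper
end
end

section
/- The 16×16 matrix G = (1/4)·(Π_1+Π_2)⊗(Π_1+Π_2) (first factor on qubits A'B', second on A''B'') is separable across the partition A=(A',A''), B=(B',B''). -/
open Matrix Complex
open scoped Kronecker ComplexOrder

noncomputable section
namespace Paper

/-!
The coherences `|00⟩⟨11|` and `|11⟩⟨00|` of `Π₁` and `Π₂` cancel, so `Π₁ + Π₂ = |00⟩⟨00| + |11⟩⟨11|`
and `G` is a diagonal matrix with nonnegative entries. Such a matrix is a mixture of computational
basis states, which are product states across every partition of the qubits.
-/

theorem pureMat_smul {d : Type*} (c : ℂ) (x : d → ℂ) :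
    pureMat (c • x) = (star c * c) • pureMat x := by
  simp only [pureMat, star_smul, smul_vecMulVec, vecMulVec_smul, smul_smul, mul_comm]

theorem pureMat_single_one {d : Type*} [DecidableEq d] (i : d) :
    pureMat (Pi.single i 1) = single i i 1 := by
  rw [pureMat, Pi.star_single, star_one, single_eq_single_vecMulVec_single]

theorem pureMat_add_add_pureMat_sub {d : Type*} (x y : d → ℂ) :
    pureMat (x + y) + pureMat (x - y) = (2 : ℂ) • (pureMat x + pureMat y) := by
  simp only [pureMat, star_add, star_sub, add_vecMulVec, sub_vecMulVec, vecMulVec_add,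
    vecMulVec_sub]
  module

theorem sepAB_of_reindex_eq_sum {ι : Type*} [Fintype ι] {ρ : M16} (x y : ι → Q2 → ℂ)
    (hρ : reindex swapMid swapMid ρ = ∑ i, pureMat (x i) ⊗ₖ pureMat (y i)) : SepAB ρ := by
  let e := (Fintype.equivFin ι).symm
  refine ⟨Fintype.card ι, x ∘ e, y ∘ e, hρ.trans ?_⟩
  exact (e.sum_comp fun i => pureMat (x i) ⊗ₖ pureMat (y i)).symm

theorem sepAB_diagonal {w : Q2 × Q2 → ℂ} (hw : 0 ≤ w) : SepAB (diagonal w) := by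
  have hsqrt (p : Q2 × Q2) : ∃ s : ℂ, w (swapMid.symm p) = star s * s :=
    CStarAlgebra.nonneg_iff_eq_star_mul_self.mp (hw _)
  choose s hs using hsqrt
  apply sepAB_of_reindex_eq_sum (fun p => s p • Pi.single p.1 1) (fun p => Pi.single p.2 1)
  calc reindex swapMid swapMid (diagonal w)
    _ = diagonal (w ∘ swapMid.symm) := by
      rw [reindex_apply, submatrix_diagonal_equiv]
    _ = ∑ p, single p p (star (s p) * s p) := by
      rw [← sum_single_eq_diagonal]
      simp only [Function.comp_apply, hs]
    _ = ∑ p, pureMat (s p • Pi.single p.1 1) ⊗ₖ pureMat (Pi.single p.2 1) := by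
      simp only [pureMat_smul, pureMat_single_one, smul_single, smul_eq_mul, mul_one,
        single_kronecker_single, Prod.mk.eta]

theorem star_invSqrt2_mul_self : star invSqrt2 * invSqrt2 = 2⁻¹ := by
  rw [invSqrt2, RCLike.star_def, conj_ofReal, ← ofReal_mul, ← mul_inv,
    Real.mul_self_sqrt zero_le_two, ofReal_inv, ofReal_ofNat]

theorem bell_zero : bell 0 = invSqrt2 • (Pi.single (0, 0) 1 + Pi.single (1, 1) 1) := by
  ext ⟨a, b⟩
  fin_cases a <;> fin_cases b <;> simp [bell]

theorem bell_one : bell 1 = invSqrt2 • (Pi.single (0, 0) 1 - Pi.single (1, 1) 1) := by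
  ext ⟨a, b⟩
  fin_cases a <;> fin_cases b <;> simp [bell]

theorem bellProj_zero_add_bellProj_one :
    BellProj 0 + BellProj 1 = diagonal (Pi.single (0, 0) 1 + Pi.single (1, 1) 1) :=
  calc BellProj 0 + BellProj 1
    _ = pureMat (bell 0) + pureMat (bell 1) := rfl
    _ = (2⁻¹ : ℂ) • (2 : ℂ) • (pureMat (Pi.single (0, 0) 1) + pureMat (Pi.single (1, 1) 1)) := by
      rw [bell_zero, bell_one, pureMat_smul, pureMat_smul, ← smul_add,
        pureMat_add_add_pureMat_sub, star_invSqrt2_mul_self]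
    _ = single (0, 0) (0, 0) 1 + single (1, 1) (1, 1) 1 := by
      rw [inv_smul_smul₀ two_ne_zero, pureMat_single_one, pureMat_single_one]
    _ = diagonal (Pi.single (0, 0) 1 + Pi.single (1, 1) 1) := by
      rw [← diagonal_single, ← diagonal_single, diagonal_add]
      rfl

/-- The state `G = (1/4)·(Π₁+Π₂) ⊗ (Π₁+Π₂)` is separable across the
partition A = (A',A''), B = (B',B''). -/
theorem stmt3 :
    SepAB ((1 / 4 : ℂ) • ((BellProj 0 + BellProj 1) ⊗ₖ (BellProj 0 + BellProj 1))) := by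
  rw [bellProj_zero_add_bellProj_one, diagonal_kronecker_diagonal, ← diagonal_smul]
  have basis_nonneg (i : Q2) : (0 : Q2 → ℂ) ≤ Pi.single i 1 := Pi.single_nonneg.mpr zero_le_one
  have weight_nonneg : (0 : Q2 → ℂ) ≤ Pi.single (0, 0) 1 + Pi.single (1, 1) 1 :=
    add_nonneg (basis_nonneg _) (basis_nonneg _)
  exact sepAB_diagonal fun p =>
    mul_nonneg (by positivity) (mul_nonneg (weight_nonneg p.1) (weight_nonneg p.2))

end Paper
end
end

section
/- Let Z_w be a Hermitian matrix on ℂ^{d_A}⊗ℂ^{d_B}, let m,n ≥ 1, and let s be a subset of the m+n tensor factors of (ℂ^{d_A})^{⊗m}⊗(ℂ^{d_B})^{⊗n} (the first m factors are the A-factors, the last n are the B-factors). Suppose there exists a positive semidefinite matrix 𝒵 on (ℂ^{d_A})^{⊗m}⊗(ℂ^{d_B})^{⊗n} such that (π_A⊗π_B)·(I_{d_A}^{⊗(m−1)}⊗Z_w⊗I_{d_B}^{⊗(n−1)})·(π_A⊗π_B) = (π_A⊗π_B)·𝒵^{T_s}·(π_A⊗π_B), where Z_w acts on the last A-factor and the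 first B-factor, and π_A, π_B are the orthogonal projectors onto the symmetric subspaces of (ℂ^{d_A})^{⊗m} and (ℂ^{d_B})^{⊗n}. Then tr(Z_w ω) ≥ 0 for every matrix ω on ℂ^{d_A}⊗ℂ^{d_B} that is separable across the A:B cut. -/
open Matrix Complex
open scoped Kronecker ComplexOrder

noncomputable section
namespace Paper

/-- Separability of a matrix on `ℂ^{dA} ⊗ ℂ^{dB}` across the A:B cut. -/
def SepCut (dA dB : ℕ) (ω : Matrix (Fin dA × Fin dB) (Fin dA × Fin dB) ℂ) : Prop :=
  ∃ (N : ℕ) (x : Fin N → Fin dA → ℂ) (y : Fin N → Fin dB → ℂ),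
    ω = ∑ k, (pureMat (x k)) ⊗ₖ (pureMat (y k))

/-- The unitary permuting the `m` tensor factors of `(ℂ^d)^{⊗m}` according to `σ`. -/
def permMat (d m : ℕ) (σ : Equiv.Perm (Fin m)) :
    Matrix (Fin m → Fin d) (Fin m → Fin d) ℂ :=
  fun p q => if q = p ∘ σ then 1 else 0

/-- The orthogonal projector onto the symmetric subspace of `(ℂ^d)^{⊗m}`:
`(1/m!)·Σ_{σ ∈ S_m} P_σ`. -/
def symProj (d m : ℕ) : Matrix (Fin m → Fin d) (Fin m → Fin d) ℂ :=
  ((m.factorial : ℂ))⁻¹ • ∑ σ : Equiv.Perm (Fin m), permMat d m σ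

/-- `I_{dA}^{⊗ m} ⊗ Z_w ⊗ I_{dB}^{⊗ n}` on `(ℂ^{dA})^{⊗(m+1)} ⊗ (ℂ^{dB})^{⊗(n+1)}`,
with `Z_w` acting on the last A-factor and the first B-factor. -/
def bigZ (dA dB m n : ℕ) (Zw : Matrix (Fin dA × Fin dB) (Fin dA × Fin dB) ℂ) :
    Matrix ((Fin (m + 1) → Fin dA) × (Fin (n + 1) → Fin dB))
      ((Fin (m + 1) → Fin dA) × (Fin (n + 1) → Fin dB)) ℂ :=
  fun p q =>
    if (∀ i : Fin (m + 1), i ≠ Fin.last m → p.1 i = q.1 i) ∧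
       (∀ j : Fin (n + 1), j ≠ 0 → p.2 j = q.2 j)
    then Zw (p.1 (Fin.last m), p.2 0) (q.1 (Fin.last m), q.2 0) else 0

/-- Partial transpose in the A-factors belonging to `sA` and the B-factors
belonging to `sB`: the corresponding row and column indices are swapped. -/
def partialTransSet (dA dB m n : ℕ) (sA : Finset (Fin (m + 1))) (sB : Finset (Fin (n + 1)))
    (M : Matrix ((Fin (m + 1) → Fin dA) × (Fin (n + 1) → Fin dB))
      ((Fin (m + 1) → Fin dA) × (Fin (n + 1) → Fin dB)) ℂ) :
    Matrix ((Fin (m + 1) → Fin dA) × (Fin (n + 1) → Fin dB))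
      ((Fin (m + 1) → Fin dA) × (Fin (n + 1) → Fin dB)) ℂ :=
  fun p q =>
    M (fun i => if i ∈ sA then q.1 i else p.1 i, fun j => if j ∈ sB then q.2 j else p.2 j)
      (fun i => if i ∈ sA then p.1 i else q.1 i, fun j => if j ∈ sB then p.2 j else q.2 j)

/-!
Test the operator identity on the product states `ρ = (x x†)^{⊗(m+1)} ⊗ (y y†)^{⊗(n+1)}` with `x`
and `y` nonzero, which the symmetric projectors fix on both sides. Tracing out the factors on which
the witness acts trivially, the left-hand side pairs with `ρ` to a positive multiple of
`tr(Z_w (x x† ⊗ y y†))`. On the right-hand side the partial transpose moves from `𝒵` to `ρ`, where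
it merely replaces the vectors in the transposed factors by their complex conjugates; hence this
side is the trace of a product of two positive semidefinite matrices. A separable `ω` is a sum of
such `x x† ⊗ y y†`.
-/

section RankOne

variable {d : Type*}

lemma pureMat_apply (x : d → ℂ) (a b : d) : pureMat x a b = x a * star (x b) := rfl

lemma pureMat_zero : pureMat (0 : d → ℂ) = 0 := zero_vecMulVec _

lemma pureMat_star (x : d → ℂ) : pureMat (star x) = (pureMat x)ᵀ := by
  simp only [pureMat, transpose_vecMulVec, star_star]

lemma posSemidef_pureMat [Finite d] (x : d → ℂ) : (pureMat x).PosSemidef :=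
  posSemidef_vecMulVec_self_star x

lemma trace_pureMat_pos [Fintype d] {x : d → ℂ} (hx : x ≠ 0) : 0 < (pureMat x).trace := by
  rw [pureMat, trace_vecMulVec]
  exact dotProduct_self_star_pos_iff.2 hx

end RankOne

lemma trace_mul_nonneg_of_posSemidef {𝕜 ι : Type*} [RCLike 𝕜] [Fintype ι] {A B : Matrix ι ι 𝕜}
    (hA : A.PosSemidef) (hB : B.PosSemidef) : 0 ≤ (A * B).trace := by
  obtain ⟨N, v, rfl⟩ := posSemidef_iff_eq_sum_vecMulVec.1 hB
  rw [Finset.mul_sum, trace_sum]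
  refine Finset.sum_nonneg fun k _ => ?_
  rw [mul_vecMulVec, trace_vecMulVec, dotProduct_comm]
  exact hA.dotProduct_mulVec_nonneg (v k)

lemma trace_submatrix_equiv {ι κ R : Type*} [Fintype ι] [Fintype κ] [AddCommMonoid R]
    (M : Matrix ι ι R) (e : κ ≃ ι) : (M.submatrix e e).trace = M.trace :=
  e.sum_comp M.diag

section TensorVec

variable {ι d : Type*} [Fintype ι]

/-- The product vector `⨂ i, x i`, with the basis of the tensor power of `ℂ^d` over `ι` indexed by
the functions `ι → d`. -/
def tensorVec (x : ι → d → ℂ) : (ι → d) → ℂ := fun p => ∏ i, x i (p i)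

lemma pureMat_tensorVec_apply (x : ι → d → ℂ) (p q : ι → d) :
    pureMat (tensorVec x) p q = ∏ i, pureMat (x i) (p i) (q i) := by
  simp only [pureMat_apply, tensorVec, star_prod, Finset.prod_mul_distrib]

lemma trace_pureMat_tensorVec [DecidableEq ι] [Fintype d] (x : ι → d → ℂ) :
    (pureMat (tensorVec x)).trace = ∏ i, (pureMat (x i)).trace := by
  simp only [trace, diag_apply, pureMat_tensorVec_apply, Fintype.prod_sum]

lemma pureMat_tensorVec_piecewise (s : Finset ι) [∀ i, Decidable (i ∈ s)]
    (x : ι → d → ℂ) (p q : ι → d) :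
    pureMat (tensorVec x) (s.piecewise q p) (s.piecewise p q) =
      pureMat (tensorVec (s.piecewise (star x) x)) p q := by
  simp only [pureMat_tensorVec_apply]
  refine Finset.prod_congr rfl fun i _ => ?_
  by_cases hi : i ∈ s <;> simp [hi, pureMat_star]

lemma pureMat_tensorVec_insertNth {n : ℕ} (k : Fin (n + 1)) (x : Fin (n + 1) → d → ℂ)
    (a b : d) (p q : Fin n → d) :
    pureMat (tensorVec x) (k.insertNth a p) (k.insertNth b q) =
      pureMat (x k) a b * pureMat (tensorVec (k.removeNth x)) p q := by
  simp only [pureMat_tensorVec_apply, Fin.prod_univ_succAbove _ k, Fin.insertNth_apply_same,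
    Fin.insertNth_apply_succAbove, Fin.removeNth]

end TensorVec

section SymmetricVectors

/-- `v` lies in the symmetric subspace of the tensor power of `ℂ^d` over `ι`: its coordinates do not
change under permutations of the tensor factors. -/
def IsSymmVec {ι d : Type*} (v : (ι → d) → ℂ) : Prop :=
  ∀ (σ : Equiv.Perm ι) (p : ι → d), v (p ∘ σ) = v p

lemma isSymmVec_tensorVec_const {ι d : Type*} [Fintype ι] (x : d → ℂ) :
    IsSymmVec (tensorVec fun _ : ι => x) :=
  fun σ p => Equiv.prod_comp σ fun i => x (p i)

lemma IsSymmVec.star {ι d : Type*} {v : (ι → d) → ℂ} (hv : IsSymmVec v) : IsSymmVec (star v) :=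
  fun σ p => congrArg Star.star (hv σ p)

variable {d m : ℕ}

lemma permMat_mulVec (σ : Equiv.Perm (Fin m)) (v : (Fin m → Fin d) → ℂ) (p : Fin m → Fin d) :
    (permMat d m σ *ᵥ v) p = v (p ∘ σ) := by
  simp [permMat, mulVec, dotProduct]

lemma vecMul_permMat (σ : Equiv.Perm (Fin m)) (v : (Fin m → Fin d) → ℂ) (q : Fin m → Fin d) :
    (v ᵥ* permMat d m σ) q = v (q ∘ σ.symm) := by
  have eq_comp_iff (p : Fin m → Fin d) : q = p ∘ σ ↔ q ∘ σ.symm = p :=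
    (Equiv.comp_symm_eq σ p q).symm
  simp [permMat, vecMul, dotProduct, eq_comp_iff]

lemma symProj_mulVec_of_isSymmVec {v : (Fin m → Fin d) → ℂ} (hv : IsSymmVec v) :
    symProj d m *ᵥ v = v := by
  ext p
  simp [symProj, smul_mulVec, sum_mulVec, permMat_mulVec, hv _ _, Fintype.card_perm,
    m.factorial_ne_zero]

lemma vecMul_symProj_of_isSymmVec {v : (Fin m → Fin d) → ℂ} (hv : IsSymmVec v) :
    v ᵥ* symProj d m = v := by
  ext q
  simp [symProj, vecMul_smul, vecMul_sum, vecMul_permMat, hv _ _, Fintype.card_perm,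
    m.factorial_ne_zero]

lemma symProj_mul_pureMat_mul_symProj {v : (Fin m → Fin d) → ℂ} (hv : IsSymmVec v) :
    symProj d m * pureMat v * symProj d m = pureMat v := by
  rw [pureMat, mul_vecMulVec, vecMulVec_mul, symProj_mulVec_of_isSymmVec hv,
    vecMul_symProj_of_isSymmVec hv.star]

lemma trace_symProj_kronecker_conj_mul_pureMat {dA dB m n : ℕ}
    (M : Matrix ((Fin m → Fin dA) × (Fin n → Fin dB)) ((Fin m → Fin dA) × (Fin n → Fin dB)) ℂ)
    {v : (Fin m → Fin dA) → ℂ} {w : (Fin n → Fin dB) → ℂ} (hv : IsSymmVec v) (hw : IsSymmVec w) :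
    ((symProj dA m ⊗ₖ symProj dB n) * M * (symProj dA m ⊗ₖ symProj dB n) *
        (pureMat v ⊗ₖ pureMat w)).trace =
      (M * (pureMat v ⊗ₖ pureMat w)).trace := by
  rw [Matrix.mul_assoc, Matrix.mul_assoc, trace_mul_comm, Matrix.mul_assoc, ← mul_kronecker_mul,
    ← mul_kronecker_mul, symProj_mul_pureMat_mul_symProj hv, symProj_mul_pureMat_mul_symProj hw]

end SymmetricVectors

section Witness

/-- The identification of `(A ⊗ B) ⊗ (A^{⊗m} ⊗ B^{⊗n})` with `A^{⊗(m+1)} ⊗ B^{⊗(n+1)}`, on basis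
indices, that places the first `A ⊗ B` at the `k`-th `A`-factor and the `l`-th `B`-factor. -/
def insertFactors {m n : ℕ} (α β : Type*) (k : Fin (m + 1)) (l : Fin (n + 1)) :
    (α × β) × (Fin m → α) × (Fin n → β) ≃ (Fin (m + 1) → α) × (Fin (n + 1) → β) :=
  (Equiv.prodProdProdComm α β _ _).trans
    ((Fin.insertNthEquiv (fun _ => α) k).prodCongr (Fin.insertNthEquiv (fun _ => β) l))

lemma insertFactors_apply {m n : ℕ} {α β : Type*} (k : Fin (m + 1)) (l : Fin (n + 1))
    (z : (α × β) × (Fin m → α) × (Fin n → β)) :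
    insertFactors α β k l z = (k.insertNth z.1.1 z.2.1, l.insertNth z.1.2 z.2.2) := rfl

lemma insertNth_eq_off_iff {n : ℕ} {α : Type*} (k : Fin (n + 1)) (a b : α) (p q : Fin n → α) :
    (∀ i, i ≠ k → k.insertNth (α := fun _ => α) a p i = k.insertNth (α := fun _ => α) b q i) ↔
      p = q := by
  simp [Fin.forall_iff_succAbove k, funext_iff, Fin.succAbove_ne]

lemma pureMat_kronecker_submatrix_insertFactors {m n : ℕ} {α β : Type*}
    (k : Fin (m + 1)) (l : Fin (n + 1)) (x : Fin (m + 1) → α → ℂ) (y : Fin (n + 1) → β → ℂ) :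
    (pureMat (tensorVec x) ⊗ₖ pureMat (tensorVec y)).submatrix
        (insertFactors α β k l) (insertFactors α β k l) =
      (pureMat (x k) ⊗ₖ pureMat (y l)) ⊗ₖ
        (pureMat (tensorVec (k.removeNth x)) ⊗ₖ pureMat (tensorVec (l.removeNth y))) := by
  ext z w
  simp only [submatrix_apply, insertFactors_apply, kronecker_apply, pureMat_tensorVec_insertNth]
  exact mul_mul_mul_comm _ _ _ _

variable {dA dB m n : ℕ} (Zw : Matrix (Fin dA × Fin dB) (Fin dA × Fin dB) ℂ)

lemma bigZ_submatrix_insertFactors :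
    (bigZ dA dB m n Zw).submatrix (insertFactors _ _ (Fin.last m) 0)
      (insertFactors _ _ (Fin.last m) 0) = Zw ⊗ₖ 1 := by
  ext ⟨⟨a, b⟩, p⟩ ⟨⟨a', b'⟩, q⟩
  simp only [submatrix_apply, insertFactors_apply, bigZ, insertNth_eq_off_iff,
    Fin.insertNth_apply_same, kronecker_apply, one_apply, Prod.ext_iff, mul_ite, mul_one, mul_zero]

lemma trace_bigZ_mul_tensorVec (x : Fin (m + 1) → Fin dA → ℂ) (y : Fin (n + 1) → Fin dB → ℂ) :
    (bigZ dA dB m n Zw * (pureMat (tensorVec x) ⊗ₖ pureMat (tensorVec y))).trace =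
      (Zw * (pureMat (x (Fin.last m)) ⊗ₖ pureMat (y 0))).trace *
        ((∏ i, (pureMat ((Fin.last m).removeNth x i)).trace) *
          ∏ j, (pureMat (Fin.removeNth 0 y j)).trace) := by
  let e := insertFactors (Fin dA) (Fin dB) (Fin.last m) (0 : Fin (n + 1))
  rw [← trace_submatrix_equiv _ e, ← submatrix_mul_equiv _ _ _ e, bigZ_submatrix_insertFactors,
    pureMat_kronecker_submatrix_insertFactors, ← mul_kronecker_mul, Matrix.one_mul,
    trace_kronecker, trace_kronecker, trace_pureMat_tensorVec, trace_pureMat_tensorVec]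

end Witness

section PartialTranspose

/-- The exchange of the row and column indices of the factors in `sA` and `sB`: the permutation of
matrix positions underlying the partial transpose. -/
def rowColSwap {ι κ α β : Type*} [DecidableEq ι] [DecidableEq κ] (sA : Finset ι) (sB : Finset κ)
    (z : ((ι → α) × (κ → β)) × ((ι → α) × (κ → β))) :
    ((ι → α) × (κ → β)) × ((ι → α) × (κ → β)) :=
  ((sA.piecewise z.2.1 z.1.1, sB.piecewise z.2.2 z.1.2),
    (sA.piecewise z.1.1 z.2.1, sB.piecewise z.1.2 z.2.2))

lemma rowColSwap_involutive {ι κ α β : Type*} [DecidableEq ι] [DecidableEq κ]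
    (sA : Finset ι) (sB : Finset κ) :
    Function.Involutive (rowColSwap sA sB (α := α) (β := β)) := fun z => by
  simp [rowColSwap, Finset.piecewise_same]

variable {dA dB m n : ℕ} (sA : Finset (Fin (m + 1))) (sB : Finset (Fin (n + 1)))

lemma trace_partialTransSet_mul
    (M N : Matrix ((Fin (m + 1) → Fin dA) × (Fin (n + 1) → Fin dB))
      ((Fin (m + 1) → Fin dA) × (Fin (n + 1) → Fin dB)) ℂ) :
    (partialTransSet dA dB m n sA sB M * N).trace =
      (M * partialTransSet dA dB m n sA sB N).trace := by
  simp only [trace, diag_apply, mul_apply, ← Fintype.sum_prod_type']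
  refine Fintype.sum_equiv (rowColSwap_involutive sA sB).toPerm _ _ fun z => ?_
  have swap_back : partialTransSet dA dB m n sA sB N (rowColSwap sA sB z).2 (rowColSwap sA sB z).1 =
      N z.2 z.1 :=
    congrArg (fun w : _ × _ => N w.2 w.1) (rowColSwap_involutive sA sB z)
  rw [Function.Involutive.coe_toPerm, swap_back]
  rfl

lemma partialTransSet_pureMat_tensorVec (x : Fin (m + 1) → Fin dA → ℂ)
    (y : Fin (n + 1) → Fin dB → ℂ) :
    partialTransSet dA dB m n sA sB (pureMat (tensorVec x) ⊗ₖ pureMat (tensorVec y)) =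
      pureMat (tensorVec (sA.piecewise (star x) x)) ⊗ₖ
        pureMat (tensorVec (sB.piecewise (star y) y)) := by
  ext p q
  exact congrArg₂ (· * ·) (pureMat_tensorVec_piecewise sA x p.1 q.1)
    (pureMat_tensorVec_piecewise sB y p.2 q.2)

lemma trace_partialTransSet_mul_tensorVec_nonneg
    {Z : Matrix ((Fin (m + 1) → Fin dA) × (Fin (n + 1) → Fin dB))
      ((Fin (m + 1) → Fin dA) × (Fin (n + 1) → Fin dB)) ℂ} (hZ : Z.PosSemidef)
    (x : Fin (m + 1) → Fin dA → ℂ) (y : Fin (n + 1) → Fin dB → ℂ) :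
    0 ≤ (partialTransSet dA dB m n sA sB Z *
      (pureMat (tensorVec x) ⊗ₖ pureMat (tensorVec y))).trace := by
  rw [trace_partialTransSet_mul, partialTransSet_pureMat_tensorVec]
  exact trace_mul_nonneg_of_posSemidef hZ
    ((posSemidef_pureMat _).kronecker (posSemidef_pureMat _))

end PartialTranspose

lemma trace_mul_nonneg_of_sepCut {dA dB : ℕ} {Zw ω : Matrix (Fin dA × Fin dB) (Fin dA × Fin dB) ℂ}
    (hpure : ∀ x y, x ≠ 0 → y ≠ 0 → 0 ≤ (Zw * (pureMat x ⊗ₖ pureMat y)).trace)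
    (hω : SepCut dA dB ω) : 0 ≤ (Zw * ω).trace := by
  obtain ⟨N, x, y, rfl⟩ := hω
  rw [Finset.mul_sum, trace_sum]
  refine Finset.sum_nonneg fun k _ => ?_
  by_cases hx : x k = 0
  · simp [hx, pureMat_zero]
  by_cases hy : y k = 0
  · simp [hy, pureMat_zero]
  exact hpure _ _ hx hy

/-- if `(π_A⊗π_B)(I^{⊗m-1}⊗Z_w⊗I^{⊗n-1})(π_A⊗π_B) = (π_A⊗π_B) 𝒵^{T_s} (π_A⊗π_B)`
for some PSD `𝒵` and some subset `s` of the tensor factors, then `Z_w` is an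
entanglement witness: `tr(Z_w ω) ≥ 0` for every separable `ω`. -/
theorem stmt4 (dA dB m n : ℕ) (Zw : Matrix (Fin dA × Fin dB) (Fin dA × Fin dB) ℂ)
    (hZw : Zw.IsHermitian)
    (sA : Finset (Fin (m + 1))) (sB : Finset (Fin (n + 1)))
    (Z : Matrix ((Fin (m + 1) → Fin dA) × (Fin (n + 1) → Fin dB))
      ((Fin (m + 1) → Fin dA) × (Fin (n + 1) → Fin dB)) ℂ)
    (hZ : Z.PosSemidef)
    (heq :
      (symProj dA (m + 1) ⊗ₖ symProj dB (n + 1)) * bigZ dA dB m n Zw *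
          (symProj dA (m + 1) ⊗ₖ symProj dB (n + 1)) =
        (symProj dA (m + 1) ⊗ₖ symProj dB (n + 1)) * partialTransSet dA dB m n sA sB Z *
          (symProj dA (m + 1) ⊗ₖ symProj dB (n + 1))) :
    ∀ ω : Matrix (Fin dA × Fin dB) (Fin dA × Fin dB) ℂ,
      SepCut dA dB ω → 0 ≤ (Zw * ω).trace := by
  refine fun ω => trace_mul_nonneg_of_sepCut fun x y hx hy => ?_
  let ρ := pureMat (tensorVec fun _ : Fin (m + 1) => x) ⊗ₖ
    pureMat (tensorVec fun _ : Fin (n + 1) => y)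
  have traces_eq : (bigZ dA dB m n Zw * ρ).trace =
      (partialTransSet dA dB m n sA sB Z * ρ).trace := by
    have hX := isSymmVec_tensorVec_const (ι := Fin (m + 1)) x
    have hY := isSymmVec_tensorVec_const (ι := Fin (n + 1)) y
    rw [← trace_symProj_kronecker_conj_mul_pureMat _ hX hY, heq,
      trace_symProj_kronecker_conj_mul_pureMat _ hX hY]
  have bigZ_nonneg : 0 ≤ (bigZ dA dB m n Zw * ρ).trace :=
    traces_eq ▸ trace_partialTransSet_mul_tensorVec_nonneg sA sB hZ _ _
  rw [trace_bigZ_mul_tensorVec] at bigZ_nonneg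
  refine le_of_mul_le_mul_right (by rwa [zero_mul]) ?_
  exact mul_pos (Finset.prod_pos fun _ _ => trace_pureMat_pos hx)
    (Finset.prod_pos fun _ _ => trace_pureMat_pos hy)

end Paper
end
end

section
/- Let W_4 be the 4×4 matrix with rows (3,3,1,−1), (3,−1,1,3), (3,−1,1,−1), (1,1,−1,1), and let Z_{w,4} = Σ_{i,j} [W_4]_{ij} Π_i⊗Π_j (first Bell projector on qubits A'B', second on A''B''). Then Z_{w,4} is an entanglement witness for the partition A=(A',A''), B=(B',B''): tr(Z_{w,4} ρ) ≥ 0 for every 16×16 matrix ρ that is separable across this partition. -/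
open Matrix Complex
open scoped Kronecker ComplexOrder

noncomputable section
namespace Paper

/-- The witness matrix `W4`. -/
def W4 : Matrix (Fin 4) (Fin 4) ℝ :=
  !![3, 3, 1, -1; 3, -1, 1, 3; 3, -1, 1, -1; 1, 1, -1, 1]

/-!
Expanding the Bell projectors in Pauli operators and regrouping the qubits as `A'A''|B'B''` turns
`Z_{w,4}` into `1 ⊗ 1 + ½ ∑ ± P ⊗ P`, where `P` runs over the ten operators `σ_z ⊗ 1` and
`τ ⊗ σ_j` with `τ ∈ {1, σ_x, σ_y}`. These are the generators of `so(5)` in its spinor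
representation, and the Fierz identity for the Pauli matrices gives `∑ ⟨x|P|x⟩² = 2 ⟨x|x⟩²` for
every `x`. On a product vector `x ⊗ y`, Cauchy–Schwarz then bounds the correlation term by
`⟨x|x⟩ ⟨y|y⟩`, the value of the identity term.
-/

section PureMat

variable {m n ι : Type*} [Fintype m] [Fintype n]

/-- The expectation value `⟨x|M|x⟩` of an observable `M` in the unnormalised state `x`. It is meant
for Hermitian `M`, where taking the real part loses nothing. -/
def expVal (M : Matrix n n ℂ) (x : n → ℂ) : ℝ := (star x ⬝ᵥ M *ᵥ x).re

lemma ofReal_expVal {M : Matrix n n ℂ} (hM : M.IsHermitian) (x : n → ℂ) :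
    (expVal M x : ℂ) = star x ⬝ᵥ M *ᵥ x :=
  Complex.ext rfl (hM.im_star_dotProduct_mulVec_self x).symm

lemma expVal_one_nonneg [DecidableEq n] (x : n → ℂ) : 0 ≤ expVal 1 x := by
  rw [expVal, one_mulVec]
  exact (Complex.nonneg_iff.mp (dotProduct_star_self_nonneg x)).1

lemma trace_mul_pureMat {M : Matrix n n ℂ} (hM : M.IsHermitian) (x : n → ℂ) :
    (M * pureMat x).trace = expVal M x := by
  rw [pureMat, mul_vecMulVec, trace_vecMulVec, dotProduct_comm, ofReal_expVal hM]

lemma trace_kronecker_mul_pureMat {M : Matrix m m ℂ} {N : Matrix n n ℂ} (hM : M.IsHermitian)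
    (hN : N.IsHermitian) (x : m → ℂ) (y : n → ℂ) :
    ((M ⊗ₖ N) * (pureMat x ⊗ₖ pureMat y)).trace = (expVal M x * expVal N y : ℝ) := by
  rw [← mul_kronecker_mul, trace_kronecker, trace_mul_pureMat hM, trace_mul_pureMat hN, ofReal_mul]

lemma abs_sum_mul_mul_le [Fintype ι] {w p q : ι → ℝ} {a b : ℝ} (ha : 0 ≤ a) (hb : 0 ≤ b)
    (hp : ∑ k, |w k| * p k ^ 2 ≤ a ^ 2) (hq : ∑ k, |w k| * q k ^ 2 ≤ b ^ 2) :
    |∑ k, w k * (p k * q k)| ≤ a * b := by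
  refine abs_le_of_sq_le_sq ?_ (mul_nonneg ha hb)
  calc (∑ k, w k * (p k * q k)) ^ 2
      ≤ (∑ k, |w k| * p k ^ 2) * ∑ k, |w k| * q k ^ 2 := by
        refine Finset.sum_sq_le_sum_mul_sum_of_sq_le_mul _ (fun k _ ↦ by positivity)
          (fun k _ ↦ by positivity) fun k _ ↦ le_of_eq ?_
        rw [mul_pow, ← sq_abs (w k)]
        ring
    _ ≤ a ^ 2 * b ^ 2 := by gcongr
    _ = (a * b) ^ 2 := (mul_pow a b 2).symm

theorem trace_one_add_sum_kronecker_mul_pureMat_nonneg [DecidableEq m] [DecidableEq n] [Fintype ι]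
    {w : ι → ℝ} {P : ι → Matrix m m ℂ} {Q : ι → Matrix n n ℂ}
    (hP : ∀ k, (P k).IsHermitian) (hQ : ∀ k, (Q k).IsHermitian) {x : m → ℂ} {y : n → ℂ}
    (hx : ∑ k, |w k| * expVal (P k) x ^ 2 ≤ expVal 1 x ^ 2)
    (hy : ∑ k, |w k| * expVal (Q k) y ^ 2 ≤ expVal 1 y ^ 2) :
    0 ≤ ((1 ⊗ₖ 1 + ∑ k, w k • (P k ⊗ₖ Q k)) * (pureMat x ⊗ₖ pureMat y)).trace := by
  have trace_eq : ((1 ⊗ₖ 1 + ∑ k, w k • (P k ⊗ₖ Q k)) * (pureMat x ⊗ₖ pureMat y)).trace =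
      ((expVal 1 x * expVal 1 y + ∑ k, w k * (expVal (P k) x * expVal (Q k) y) : ℝ) : ℂ) := by
    simp only [add_mul, Finset.sum_mul, smul_mul_assoc, trace_add, trace_sum, trace_smul,
      trace_kronecker_mul_pureMat isHermitian_one isHermitian_one,
      trace_kronecker_mul_pureMat (hP _) (hQ _)]
    push_cast
    simp only [real_smul]
  have lower := (abs_le.mp
    (abs_sum_mul_mul_le (expVal_one_nonneg x) (expVal_one_nonneg y) hx hy)).1
  rw [trace_eq, zero_le_real]
  linarith

end PureMat

section Kronecker

variable {l m n p ι ι' κ κ' R A : Type*}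

lemma isHermitian_kronecker [CommMagma R] [StarMul R] {M : Matrix m m R} {N : Matrix n n R}
    (hM : M.IsHermitian) (hN : N.IsHermitian) : (M ⊗ₖ N).IsHermitian := by
  rw [IsHermitian, conjTranspose_kronecker, hM.eq, hN.eq]

lemma dotProduct_kronecker_mulVec [CommSemiring R] [Fintype l] [Fintype m] [Fintype n] [Fintype p]
    (x : l × n → R) (M : Matrix l m R) (N : Matrix n p R) (y : m × p → R) :
    x ⬝ᵥ (M ⊗ₖ N) *ᵥ y =
      ∑ r, ∑ s, M r s * (Function.curry x r ⬝ᵥ N *ᵥ Function.curry y s) := by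
  simp only [dotProduct, mulVec, Fintype.sum_prod_type, kroneckerMap_apply, Finset.mul_sum,
    Function.curry_apply]
  refine Finset.sum_congr rfl fun r _ ↦ ?_
  rw [Finset.sum_comm]
  exact Finset.sum_congr rfl fun s _ ↦ Finset.sum_congr rfl fun i _ ↦
    Finset.sum_congr rfl fun j _ ↦ by ring

lemma sum_smul_kronecker_sum_smul [CommSemiring R] [CommSemiring A] [Algebra R A]
    [Fintype ι] [Fintype ι'] [Fintype κ] [Fintype κ']
    (W : Matrix ι ι' R) (a : Matrix ι κ R) (b : Matrix ι' κ' R)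
    (M : κ → Matrix l m A) (N : κ' → Matrix n p A) :
    ∑ i, ∑ j, W i j • ((∑ μ, a i μ • M μ) ⊗ₖ ∑ ν, b j ν • N ν) =
      ∑ μ, ∑ ν, (aᵀ * W * b) μ ν • (M μ ⊗ₖ N ν) := by
  ext r s
  simp only [Matrix.sum_apply, Matrix.smul_apply, kroneckerMap_apply, Matrix.mul_apply,
    transpose_apply, Algebra.smul_def, map_sum, map_mul, Finset.sum_mul, Finset.mul_sum]
  rw [Finset.sum_comm_cycle, Finset.sum_comm (s := (Finset.univ : Finset κ))]
  refine Finset.sum_congr rfl fun ν _ ↦ ?_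
  rw [Finset.sum_comm_cycle]
  refine Finset.sum_congr rfl fun μ _ ↦ ?_
  rw [Finset.sum_comm]
  exact Finset.sum_congr rfl fun j _ ↦ Finset.sum_congr rfl fun i _ ↦ by ring

lemma reindex_swapMid_kronecker (A B C D : Matrix (Fin 2) (Fin 2) ℂ) :
    reindex swapMid swapMid ((A ⊗ₖ B) ⊗ₖ (C ⊗ₖ D)) = (A ⊗ₖ C) ⊗ₖ (B ⊗ₖ D) := by
  ext p q
  simp only [reindex_apply, submatrix_apply, kroneckerMap_apply]
  exact mul_mul_mul_comm ..

end Kronecker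

lemma SepAB.trace_mul_nonneg {Z ρ : M16} (hρ : SepAB ρ)
    (hZ : ∀ x y : Q2 → ℂ,
      0 ≤ (reindex swapMid swapMid Z * (pureMat x ⊗ₖ pureMat y)).trace) :
    0 ≤ (Z * ρ).trace := by
  obtain ⟨n, x, y, hxy⟩ := hρ
  have trace_reindex :
      (Z * ρ).trace = (reindex swapMid swapMid Z * reindex swapMid swapMid ρ).trace := by
    rw [reindex_apply, reindex_apply, submatrix_mul_equiv]
    exact (swapMid.symm.sum_comp fun p ↦ (Z * ρ) p p).symm
  rw [trace_reindex, hxy, Finset.mul_sum, trace_sum]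
  exact Finset.sum_nonneg fun k _ ↦ hZ (x k) (y k)

section Pauli

/-- The operator basis `1, σ_x, σ_y, σ_z` of the `2 × 2` matrices. -/
def pauliBasis : Fin 4 → Matrix (Fin 2) (Fin 2) ℂ := vecCons 1 pauli

/-- The two-qubit Pauli operators `σ_μ ⊗ σ_ν`, including the identity factors. -/
def pauliProd (k : Fin 4 × Fin 4) : M4 := pauliBasis k.1 ⊗ₖ pauliBasis k.2

lemma isHermitian_pauli (j : Fin 3) : (pauli j).IsHermitian := by
  ext a b
  fin_cases j <;> fin_cases a <;> fin_cases b <;> simp [pauli]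

lemma isHermitian_pauliProd (k : Fin 4 × Fin 4) : (pauliProd k).IsHermitian := by
  have isHermitian_pauliBasis (μ : Fin 4) : (pauliBasis μ).IsHermitian :=
    Fin.cases isHermitian_one isHermitian_pauli μ
  exact isHermitian_kronecker (isHermitian_pauliBasis _) (isHermitian_pauliBasis _)

lemma pauliProd_zero : pauliProd (0, 0) = 1 := one_kronecker_one

/-- Coordinates of the Bell projectors: `Π_i = ∑_μ bellCoeff i μ • σ_μ ⊗ σ_μ`. -/
def bellCoeff : Matrix (Fin 4) (Fin 4) ℝ :=
  (1 / 4 : ℝ) • !![1, 1, -1, 1; 1, -1, 1, 1; 1, 1, 1, -1; 1, -1, -1, -1]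

lemma bellProj_eq_sum (i : Fin 4) :
    BellProj i = ∑ μ, bellCoeff i μ • (pauliBasis μ ⊗ₖ pauliBasis μ) := by
  have star_invSqrt2 : star invSqrt2 = invSqrt2 := conj_ofReal _
  ext ⟨a, b⟩ ⟨c, d⟩
  fin_cases i <;> fin_cases a <;> fin_cases b <;> fin_cases c <;> fin_cases d <;>
    simp [BellProj, bell, vecMulVec_apply, bellCoeff, pauliBasis, pauli, Fin.sum_univ_succ,
      star_invSqrt2, invSqrt2_mul_self] <;>
    norm_num

/-- The coefficients of `Z_{w,4}` on the operators `σ_μ ⊗ σ_ν ⊗ σ_μ ⊗ σ_ν` (in the order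
`A', A'', B', B''`), except for the coefficient `1` of the identity. -/
def witnessWeight : Matrix (Fin 4) (Fin 4) ℝ :=
  (1 / 2 : ℝ) • !![0, 1, -1, 1; 0, 1, 1, 1; 0, 1, -1, -1; 1, 0, 0, 0]

lemma bellCoeff_transpose_mul_W4_mul_bellCoeff :
    bellCoeffᵀ * W4 * bellCoeff = Matrix.single 0 0 1 + witnessWeight := by
  ext μ ν
  fin_cases μ <;> fin_cases ν <;>
    norm_num [bellCoeff, W4, witnessWeight, Matrix.mul_apply, Fin.sum_univ_succ, Matrix.single]

lemma reindex_swapMid_witness :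
    reindex swapMid swapMid (∑ i, ∑ j, (W4 i j : ℂ) • (BellProj i ⊗ₖ BellProj j)) =
      1 ⊗ₖ 1 + ∑ k : Fin 4 × Fin 4,
        witnessWeight k.1 k.2 • (pauliProd k ⊗ₖ pauliProd k) := by
  have identity_term : ∑ μ, ∑ ν, Matrix.single (0 : Fin 4) (0 : Fin 4) (1 : ℝ) μ ν •
      (pauliProd (μ, ν) ⊗ₖ pauliProd (μ, ν)) = 1 ⊗ₖ 1 := by
    rw [Fintype.sum_eq_single 0 fun μ hμ ↦ by simp [hμ.symm],
      Fintype.sum_eq_single 0 fun ν hν ↦ by simp [hν.symm], single_apply_same, one_smul,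
      pauliProd_zero]
  simp only [bellProj_eq_sum, coe_smul, sum_smul_kronecker_sum_smul W4 bellCoeff bellCoeff,
    bellCoeff_transpose_mul_W4_mul_bellCoeff, ← coe_reindexLinearEquiv ℝ ℂ, map_sum, map_smul]
  simp only [coe_reindexLinearEquiv, reindex_swapMid_kronecker, Matrix.add_apply, add_smul,
    Finset.sum_add_distrib, Fintype.sum_prod_type]
  exact congrArg (· + _) identity_term

lemma pauli_fierz (a b c d : Fin 2 → ℂ) :
    ∑ j, (a ⬝ᵥ pauli j *ᵥ b) * (c ⬝ᵥ pauli j *ᵥ d) =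
      2 * (a ⬝ᵥ d) * (c ⬝ᵥ b) - (a ⬝ᵥ b) * (c ⬝ᵥ d) := by
  simp only [dotProduct, mulVec, pauli, Fin.sum_univ_two, Fin.sum_univ_three, of_apply, cons_val]
  linear_combination (a 0 * b 1 - a 1 * b 0) * (c 0 * d 1 - c 1 * d 0) * I_sq

/-- The matrix elements `⟨x_r|σ_ν|x_s⟩`, where `x_0, x_1` are the components of the two-qubit
state `x` along the basis states of the first qubit. -/
def pauliBlock (x : Q2 → ℂ) (ν : Fin 4) : Matrix (Fin 2) (Fin 2) ℂ :=
  of fun r s ↦ star (Function.curry x r) ⬝ᵥ pauliBasis ν *ᵥ Function.curry x s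

lemma ofReal_expVal_pauliProd (μ ν : Fin 4) (x : Q2 → ℂ) :
    (expVal (pauliProd (μ, ν)) x : ℂ) = ∑ r, ∑ s, pauliBasis μ r s * pauliBlock x ν r s := by
  rw [ofReal_expVal (isHermitian_pauliProd _), pauliProd, dotProduct_kronecker_mulVec]
  rfl

lemma pauliBlock_fierz (x : Q2 → ℂ) (r s r' s' : Fin 2) :
    ∑ j : Fin 3, pauliBlock x j.succ r s * pauliBlock x j.succ r' s' =
      2 * pauliBlock x 0 r s' * pauliBlock x 0 r' s -
        pauliBlock x 0 r s * pauliBlock x 0 r' s' := by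
  simpa [pauliBlock, pauliBasis] using pauli_fierz (star (Function.curry x r))
    (Function.curry x s) (star (Function.curry x r')) (Function.curry x s')

lemma expVal_pauliProd_sq_add_sq_add_sq (x : Q2 → ℂ) (ν : Fin 4) :
    (expVal (pauliProd (0, ν)) x ^ 2 + expVal (pauliProd (1, ν)) x ^ 2 +
      expVal (pauliProd (2, ν)) x ^ 2 : ℂ) =
    pauliBlock x ν 0 0 * pauliBlock x ν 0 0 + pauliBlock x ν 1 1 * pauliBlock x ν 1 1 +
      2 * (pauliBlock x ν 0 0 * pauliBlock x ν 1 1) +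
      4 * (pauliBlock x ν 0 1 * pauliBlock x ν 1 0) := by
  have expVal_id : (expVal (pauliProd (0, ν)) x : ℂ) =
      pauliBlock x ν 0 0 + pauliBlock x ν 1 1 := by
    simp [ofReal_expVal_pauliProd, pauliBasis]
  have expVal_x : (expVal (pauliProd (1, ν)) x : ℂ) =
      pauliBlock x ν 0 1 + pauliBlock x ν 1 0 := by
    simp [ofReal_expVal_pauliProd, pauliBasis, pauli]
  have expVal_y : (expVal (pauliProd (2, ν)) x : ℂ) =
      -I * pauliBlock x ν 0 1 + I * pauliBlock x ν 1 0 := by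
    simp [ofReal_expVal_pauliProd, pauliBasis, pauli]
  rw [expVal_id, expVal_x, expVal_y]
  linear_combination (pauliBlock x ν 0 1 - pauliBlock x ν 1 0) ^ 2 * I_sq

lemma sum_expVal_pauliProd_sq (x : Q2 → ℂ) :
    ∑ j : Fin 3, (expVal (pauliProd (0, j.succ)) x ^ 2 + expVal (pauliProd (1, j.succ)) x ^ 2 +
      expVal (pauliProd (2, j.succ)) x ^ 2) + expVal (pauliProd (3, 0)) x ^ 2 =
      2 * expVal 1 x ^ 2 := by
  have expVal_z : (expVal (pauliProd (3, 0)) x : ℂ) =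
      pauliBlock x 0 0 0 - pauliBlock x 0 1 1 := by
    simp [ofReal_expVal_pauliProd, pauliBasis, pauli, sub_eq_add_neg]
  have expVal_id : (expVal 1 x : ℂ) = pauliBlock x 0 0 0 + pauliBlock x 0 1 1 := by
    simp [← pauliProd_zero, ofReal_expVal_pauliProd, pauliBasis]
  apply ofReal_injective
  push_cast
  simp only [expVal_pauliProd_sq_add_sq_add_sq, expVal_z, expVal_id, Finset.sum_add_distrib,
    ← Finset.mul_sum, pauliBlock_fierz]
  ring

lemma sum_abs_witnessWeight_mul_expVal_sq (x : Q2 → ℂ) :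
    ∑ k : Fin 4 × Fin 4, |witnessWeight k.1 k.2| * expVal (pauliProd k) x ^ 2 =
      expVal 1 x ^ 2 := by
  calc ∑ k : Fin 4 × Fin 4, |witnessWeight k.1 k.2| * expVal (pauliProd k) x ^ 2
      = 1 / 2 * (∑ j : Fin 3, (expVal (pauliProd (0, j.succ)) x ^ 2 +
          expVal (pauliProd (1, j.succ)) x ^ 2 + expVal (pauliProd (2, j.succ)) x ^ 2) +
          expVal (pauliProd (3, 0)) x ^ 2) := by
        simp only [Fintype.sum_prod_type, Fin.sum_univ_four, Fin.sum_univ_three, Fin.reduceSucc,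
          Fin.succ_zero_eq_one, Fin.succ_one_eq_two, witnessWeight, Matrix.smul_apply, of_apply,
          cons_val, smul_eq_mul, abs_mul, abs_neg, abs_zero, abs_one, one_div, abs_inv,
          Nat.abs_ofNat]
        ring
    _ = expVal 1 x ^ 2 := by
        rw [sum_expVal_pauliProd_sq]
        ring

end Pauli

/-- STATEMENT: `Z_{w,4} = Σ_{ij} [W4]_{ij} Π_i⊗Π_j` is an entanglement witness for
the partition A = (A',A''), B = (B',B''): `tr(Z_{w,4} ρ) ≥ 0` for every matrix `ρ`
separable across this partition. -/
theorem stmt8 (ρ : M16) (hρ : SepAB ρ) :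
    0 ≤ ((∑ i, ∑ j, (W4 i j : ℂ) • (BellProj i ⊗ₖ BellProj j)) * ρ).trace := by
  refine hρ.trace_mul_nonneg fun x y ↦ ?_
  rw [reindex_swapMid_witness]
  exact trace_one_add_sum_kronecker_mul_pureMat_nonneg isHermitian_pauliProd isHermitian_pauliProd
    (sum_abs_witnessWeight_mul_expVal_sq x).le (sum_abs_witnessWeight_mul_expVal_sq y).le

end Paper
end
end
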